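/- Let f : ℝ^p × ℝ^{n_x} × ℝ^{n_u} × ℝ^{n_y} → ℝ^{n_x} and h : ℝ^p × ℝ^{n_x} → ℝ^{n_y} satisfy the squared Lipschitz bounds ‖f(θ,x,u,w) − f(θ',x',u,w')‖² ≤ L_f²(‖θ−θ'‖² + ‖x−x'‖² + ‖w−w'‖²) and ‖h(θ,x) − h(θ',x')‖² ≤ L_h²(‖θ−θ'‖² + ‖x−x'‖²), and let ψ : ℝ^q × ℝ^D → ℝ^{n_x} satisfy ‖ψ(η,z) − ψ(η',z)‖² ≤ L_ψ²‖η−η'‖². Fix a data point z ∈ ℝ^D and sequences u_0, u_1, … in ℝ^{n_u} and y_0, y_1, … in ℝ^{n_y}. For parameters (θ,η), define the encoder-initialized innovation predictor by x̂_0(θ,η) = ψ(η, z), x̂_{k+1}(θ,η) = f(θ, x̂_k(θ,η), u_k, y_k − h(θ, x̂_k(θ,η))), and ŷ_k(θ,η) = h(θ, x̂_k(θ,η)). Then with L̃ = L_f·√(1+L_h²), for every k ≥ 0 and all parameters, ‖ŷ_k(θ,η) − ŷ_k(θ',η')‖² ≤ L_h²((1 + Σ_{j=1}^{k} L̃^{2j})‖θ−θ'‖²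 + L̃^{2k} L_ψ² ‖η−η'‖²). -/

import Mathlib

/-!
Both predictors see the same measured output `y_k`, so their innovations `y_k - h(θ, x)` differ
exactly as their outputs do. Inserting the bound for `h` into the bound for `f` makes the
closed-loop transition Lipschitz with constant `L̃`, jointly in parameter and state, so the squared
state error `e_k` satisfies `e_{k+1} ≤ L̃² (‖θ - θ'‖² + e_k)` with `e_0 ≤ L_ψ² ‖η - η'‖²`. The
discrete Grönwall inequality solves this recursion, and the bound for `h` carries the solution over
to the outputs.
-/

open Finset

theorem mul_geom_sum_eq_sum_Icc {R : Type*} [Semiring R] (x : R) (n : ℕ) :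
    x * ∑ i ∈ range n, x ^ i = ∑ j ∈ Icc 1 n, x ^ j := by
  rw [mul_sum, range_eq_Ico, ← Ico_add_one_right_eq_Icc, ← sum_Ico_add' (x ^ ·) 0 n 1]
  simp only [pow_succ']

theorem discrete_gronwall_const {R : Type*} [CommSemiring R] [PartialOrder R] [IsOrderedRing R]
    {a : ℕ → R} {b c : R} (hc : 0 ≤ c) (ha : ∀ n, a (n + 1) ≤ c * a n + b) (n : ℕ) :
    a n ≤ c ^ n * a 0 + (∑ i ∈ range n, c ^ i) * b := by
  have gronwall := discrete_gronwall_prod_general (c := fun _ ↦ c) (b := fun _ ↦ b)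
    (fun n _ ↦ ha n) (fun _ _ ↦ hc) n.zero_le
  simp only [prod_const, Nat.card_Ico, ← range_eq_Ico, ← mul_sum] at gronwall
  rw [← sum_range_reflect, mul_comm (c ^ n), mul_comm _ b]
  simpa only [card_range, Nat.sub_sub, add_comm 1] using gronwall

theorem dist_orbit_sq_le {P X : Type*} [PseudoMetricSpace P] [PseudoMetricSpace X]
    {g : ℕ → P → X → X} {L : ℝ} {θ θ' : P} {x x' : ℕ → X}
    (hg : ∀ k s s', dist (g k θ s) (g k θ' s') ^ 2 ≤ L ^ 2 * (dist θ θ' ^ 2 + dist s s' ^ 2))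
    (hx : ∀ k, x (k + 1) = g k θ (x k)) (hx' : ∀ k, x' (k + 1) = g k θ' (x' k)) (k : ℕ) :
    dist (x k) (x' k) ^ 2 ≤
      (∑ j ∈ Icc 1 k, L ^ (2 * j)) * dist θ θ' ^ 2 + L ^ (2 * k) * dist (x 0) (x' 0) ^ 2 := by
  have recursion (n : ℕ) : dist (x (n + 1)) (x' (n + 1)) ^ 2 ≤
      L ^ 2 * dist (x n) (x' n) ^ 2 + L ^ 2 * dist θ θ' ^ 2 := by
    rw [hx, hx', ← mul_add, add_comm (dist (x n) (x' n) ^ 2)]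
    exact hg n (x n) (x' n)
  calc
    dist (x k) (x' k) ^ 2
      ≤ (L ^ 2) ^ k * dist (x 0) (x' 0) ^ 2 +
          (∑ i ∈ range k, (L ^ 2) ^ i) * (L ^ 2 * dist θ θ' ^ 2) :=
        discrete_gronwall_const (a := fun n ↦ dist (x n) (x' n) ^ 2) (sq_nonneg L) recursion k
    _ = (∑ j ∈ Icc 1 k, L ^ (2 * j)) * dist θ θ' ^ 2 + L ^ (2 * k) * dist (x 0) (x' 0) ^ 2 := by
        simp only [pow_mul L 2, ← mul_geom_sum_eq_sum_Icc]
        ring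

/-- The effective closed-loop Lipschitz constant `L̃ = L_f √(1 + L_h²)`: it bounds the
innovation-form state transition jointly in parameter and state. -/
noncomputable def closedLoopLipschitz (Lf Lh : ℝ) : ℝ :=
  Lf * √(1 + Lh ^ 2)

theorem closedLoopLipschitz_sq (Lf Lh : ℝ) :
    closedLoopLipschitz Lf Lh ^ 2 = Lf ^ 2 * (1 + Lh ^ 2) := by
  rw [closedLoopLipschitz, mul_pow, Real.sq_sqrt (by positivity)]

/-- The innovation-form state transition: `f` is fed the innovation `y - h θ x`, the error of the
output prediction, in place of the measured output `y`. -/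
def innovationStep {P X U Y : Type*} [Sub Y] (f : P → X → U → Y → X) (h : P → X → Y)
    (u : U) (y : Y) (θ : P) (x : X) : X :=
  f θ x u (y - h θ x)

section InnovationForm

variable {P X U Y : Type*} [PseudoMetricSpace P] [PseudoMetricSpace X] [SeminormedAddCommGroup Y]
  {f : P → X → U → Y → X} {h : P → X → Y} {Lf Lh : ℝ}

theorem dist_innovationStep_sq_le
    (hf : ∀ θ θ' x x' u w w', dist (f θ x u w) (f θ' x' u w') ^ 2 ≤
      Lf ^ 2 * (dist θ θ' ^ 2 + dist x x' ^ 2 + dist w w' ^ 2))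
    (hh : ∀ θ θ' x x', dist (h θ x) (h θ' x') ^ 2 ≤ Lh ^ 2 * (dist θ θ' ^ 2 + dist x x' ^ 2))
    (u : U) (y : Y) (θ θ' : P) (x x' : X) :
    dist (innovationStep f h u y θ x) (innovationStep f h u y θ' x') ^ 2 ≤
      closedLoopLipschitz Lf Lh ^ 2 * (dist θ θ' ^ 2 + dist x x' ^ 2) := by
  calc
    dist (innovationStep f h u y θ x) (innovationStep f h u y θ' x') ^ 2
      ≤ Lf ^ 2 * (dist θ θ' ^ 2 + dist x x' ^ 2 + dist (y - h θ x) (y - h θ' x') ^ 2) :=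
        hf θ θ' x x' u _ _
    _ = Lf ^ 2 * (dist θ θ' ^ 2 + dist x x' ^ 2 + dist (h θ x) (h θ' x') ^ 2) := by
        rw [dist_sub_left]
    _ ≤ Lf ^ 2 * (dist θ θ' ^ 2 + dist x x' ^ 2 + Lh ^ 2 * (dist θ θ' ^ 2 + dist x x' ^ 2)) := by
        gcongr
        exact hh θ θ' x x'
    _ = closedLoopLipschitz Lf Lh ^ 2 * (dist θ θ' ^ 2 + dist x x' ^ 2) := by
        rw [closedLoopLipschitz_sq]
        ring

theorem subnet_predictor_sensitivity_general {Q Z : Type*} [PseudoMetricSpace Q] {ψ : Q → Z → X}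
    {Lψ : ℝ}
    (hf : ∀ θ θ' x x' u w w', dist (f θ x u w) (f θ' x' u w') ^ 2 ≤
      Lf ^ 2 * (dist θ θ' ^ 2 + dist x x' ^ 2 + dist w w' ^ 2))
    (hh : ∀ θ θ' x x', dist (h θ x) (h θ' x') ^ 2 ≤ Lh ^ 2 * (dist θ θ' ^ 2 + dist x x' ^ 2))
    (hψ : ∀ η η' z, dist (ψ η z) (ψ η' z) ^ 2 ≤ Lψ ^ 2 * dist η η' ^ 2)
    {z : Z} {u : ℕ → U} {y : ℕ → Y} {θ θ' : P} {η η' : Q} {x x' : ℕ → X}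
    (hx₀ : x 0 = ψ η z) (hx₀' : x' 0 = ψ η' z)
    (hx : ∀ k, x (k + 1) = innovationStep f h (u k) (y k) θ (x k))
    (hx' : ∀ k, x' (k + 1) = innovationStep f h (u k) (y k) θ' (x' k)) (k : ℕ) :
    dist (h θ (x k)) (h θ' (x' k)) ^ 2 ≤
      Lh ^ 2 * ((1 + ∑ j ∈ Icc 1 k, closedLoopLipschitz Lf Lh ^ (2 * j)) * dist θ θ' ^ 2 +
        closedLoopLipschitz Lf Lh ^ (2 * k) * Lψ ^ 2 * dist η η' ^ 2) := by
  set L := closedLoopLipschitz Lf Lh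
  have state_le : dist (x k) (x' k) ^ 2 ≤
      (∑ j ∈ Icc 1 k, L ^ (2 * j)) * dist θ θ' ^ 2 + L ^ (2 * k) * dist (x 0) (x' 0) ^ 2 :=
    dist_orbit_sq_le (g := fun k ↦ innovationStep f h (u k) (y k))
      (fun k ↦ dist_innovationStep_sq_le hf hh (u k) (y k) θ θ') hx hx' k
  have initial_le : dist (x 0) (x' 0) ^ 2 ≤ Lψ ^ 2 * dist η η' ^ 2 := by
    simpa only [hx₀, hx₀'] using hψ η η' z
  calc
    dist (h θ (x k)) (h θ' (x' k)) ^ 2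
      ≤ Lh ^ 2 * (dist θ θ' ^ 2 + dist (x k) (x' k) ^ 2) := hh θ θ' (x k) (x' k)
    _ ≤ Lh ^ 2 * (dist θ θ' ^ 2 + ((∑ j ∈ Icc 1 k, L ^ (2 * j)) * dist θ θ' ^ 2 +
          L ^ (2 * k) * (Lψ ^ 2 * dist η η' ^ 2))) := by
        grw [state_le, initial_le]
        exact (even_two_mul k).pow_nonneg L
    _ = Lh ^ 2 * ((1 + ∑ j ∈ Icc 1 k, L ^ (2 * j)) * dist θ θ' ^ 2 +
          L ^ (2 * k) * Lψ ^ 2 * dist η η' ^ 2) := by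
        ring

end InnovationForm

/-- Parameter sensitivity of the encoder-initialized innovation predictor (SUBNET):
with `L̃ = L_f √(1+L_h²)`, the k-step-ahead output prediction satisfies
`‖ŷ_k(θ,η) − ŷ_k(θ',η')‖² ≤ L_h²((1 + Σ_{j=1}^k L̃^{2j})‖θ−θ'‖² + L̃^{2k} L_ψ² ‖η−η'‖²)`. -/
theorem subnet_predictor_sensitivity
    {p q nx nu ny D : ℕ}
    (f : EuclideanSpace ℝ (Fin p) → EuclideanSpace ℝ (Fin nx) → EuclideanSpace ℝ (Fin nu) →
      EuclideanSpace ℝ (Fin ny) → EuclideanSpace ℝ (Fin nx))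
    (h : EuclideanSpace ℝ (Fin p) → EuclideanSpace ℝ (Fin nx) → EuclideanSpace ℝ (Fin ny))
    (ψ : EuclideanSpace ℝ (Fin q) → EuclideanSpace ℝ (Fin D) → EuclideanSpace ℝ (Fin nx))
    (Lf Lh Lψ : ℝ)
    (hf : ∀ θ θ' x x' u w w',
      ‖f θ x u w - f θ' x' u w'‖ ^ 2 ≤ Lf ^ 2 * (‖θ - θ'‖ ^ 2 + ‖x - x'‖ ^ 2 + ‖w - w'‖ ^ 2))
    (hh : ∀ θ θ' x x',
      ‖h θ x - h θ' x'‖ ^ 2 ≤ Lh ^ 2 * (‖θ - θ'‖ ^ 2 + ‖x - x'‖ ^ 2))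
    (hψ : ∀ η η' z, ‖ψ η z - ψ η' z‖ ^ 2 ≤ Lψ ^ 2 * ‖η - η'‖ ^ 2)
    (z : EuclideanSpace ℝ (Fin D))
    (u : ℕ → EuclideanSpace ℝ (Fin nu)) (y : ℕ → EuclideanSpace ℝ (Fin ny))
    (θ θ' : EuclideanSpace ℝ (Fin p)) (η η' : EuclideanSpace ℝ (Fin q))
    (xh xh' : ℕ → EuclideanSpace ℝ (Fin nx))
    (hx0 : xh 0 = ψ η z) (hx0' : xh' 0 = ψ η' z)
    (hxs : ∀ k, xh (k + 1) = f θ (xh k) (u k) (y k - h θ (xh k)))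
    (hxs' : ∀ k, xh' (k + 1) = f θ' (xh' k) (u k) (y k - h θ' (xh' k))) :
    ∀ k : ℕ,
      ‖h θ (xh k) - h θ' (xh' k)‖ ^ 2 ≤
        Lh ^ 2 * ((1 + ∑ j ∈ Finset.Icc 1 k, (Lf * Real.sqrt (1 + Lh ^ 2)) ^ (2 * j)) *
            ‖θ - θ'‖ ^ 2 +
          (Lf * Real.sqrt (1 + Lh ^ 2)) ^ (2 * k) * Lψ ^ 2 * ‖η - η'‖ ^ 2) := by
  simp only [← dist_eq_norm] at hf hh hψ ⊢
  exact subnet_predictor_sensitivity_general hf hh hψ hx0 hx0' hxs hxs'
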